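/- Fix p > 1, dimension d ≥ (4p−1)/(p−1), and ε > 0. Then there exists a nested sequence B ⊇ K_1 ⊇ K_2 ⊇ ⋯ of centrally symmetric compact convex sets in ℝ^d such that (I) the Hausdorff distance D_∞(B, K_i) ≤ ε for all i, (II) Σ_{i=1}^∞ D_p(K_i, K_{i+1}) = ∞, and (III) the sequence D_p(K_i, K_{i+1}) is nonincreasing in i. -/

import Mathlib

open MeasureTheory Real Set
open scoped RealInnerProductSpace

noncomputable section

/-- The normalized uniform (surface) measure on the unit sphere in `ℝ^d`. -/
def sphereMeasure (d : ℕ) : Measure (Metric.sphere (0 : EuclideanSpace ℝ (Fin d)) 1) :=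
  ((volume : Measure (EuclideanSpace ℝ (Fin d))).toSphere Set.univ)⁻¹ •
    (volume : Measure (EuclideanSpace ℝ (Fin d))).toSphere

/-- The support function of a set `K ⊆ ℝ^d`. -/
def suppFn {d : ℕ} (K : Set (EuclideanSpace ℝ (Fin d))) (y : EuclideanSpace ℝ (Fin d)) : ℝ :=
  sSup ((fun x => ⟪x, y⟫) '' K)

/-- The `L_p` analog of the Hausdorff distance: the `L_p`-distance of support functions
with respect to the normalized uniform measure on the sphere. -/
def Dp {d : ℕ} (p : ℝ) (K K' : Set (EuclideanSpace ℝ (Fin d))) : ℝ :=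
  (∫ y : Metric.sphere (0 : EuclideanSpace ℝ (Fin d)) 1,
      |suppFn K (y : EuclideanSpace ℝ (Fin d)) - suppFn K' (y : EuclideanSpace ℝ (Fin d))| ^ p
    ∂ sphereMeasure d) ^ (1 / p)

/-- The open spherical cap of angular radius `θ` around `v`, as a subset of `ℝ^d`. -/
def cap {d : ℕ} (v : EuclideanSpace ℝ (Fin d)) (θ : ℝ) : Set (EuclideanSpace ℝ (Fin d)) :=
  {x | ‖x‖ = 1 ∧ Real.arccos ⟪x, v⟫ < θ}

/-- The open spherical cap, as a subset of the unit sphere (for measuring). -/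
def capS {d : ℕ} (v : EuclideanSpace ℝ (Fin d)) (θ : ℝ) :
    Set (Metric.sphere (0 : EuclideanSpace ℝ (Fin d)) 1) :=
  {x | Real.arccos ⟪(x : EuclideanSpace ℝ (Fin d)), v⟫ < θ}

/-- The Steiner point of a set `K ⊆ ℝ^d`. -/
def steiner {d : ℕ} (K : Set (EuclideanSpace ℝ (Fin d))) : EuclideanSpace ℝ (Fin d) :=
  (d : ℝ) • ∫ y : Metric.sphere (0 : EuclideanSpace ℝ (Fin d)) 1,
      suppFn K (y : EuclideanSpace ℝ (Fin d)) • (y : EuclideanSpace ℝ (Fin d)) ∂ sphereMeasure d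

/-! ### Support functions -/

/-- The ball intersected with a symmetric slab. -/
def slabBody {d : ℕ} (v : EuclideanSpace ℝ (Fin d)) (t : ℝ) : Set (EuclideanSpace ℝ (Fin d)) :=
  {x | ‖x‖ ≤ 1 ∧ |⟪x, v⟫| ≤ t}

lemma suppFn_bdd {d : ℕ} {K : Set (EuclideanSpace ℝ (Fin d))} (hK : ∀ x ∈ K, ‖x‖ ≤ 1)
    (y : EuclideanSpace ℝ (Fin d)) : BddAbove ((fun x => ⟪x, y⟫) '' K) := by
  refine ⟨‖y‖, ?_⟩
  rintro _ ⟨x, hx, rfl⟩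
  have h1 := real_inner_le_norm x y
  have h2 := hK x hx
  have h3 := norm_nonneg y
  simp only
  nlinarith

lemma le_suppFn {d : ℕ} {K : Set (EuclideanSpace ℝ (Fin d))} (hK : ∀ x ∈ K, ‖x‖ ≤ 1)
    {x : EuclideanSpace ℝ (Fin d)} (hx : x ∈ K) (y : EuclideanSpace ℝ (Fin d)) :
    ⟪x, y⟫ ≤ suppFn K y :=
  le_csSup (suppFn_bdd hK y) ⟨x, hx, rfl⟩

lemma suppFn_le {d : ℕ} {K : Set (EuclideanSpace ℝ (Fin d))} (h0 : K.Nonempty)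
    {y : EuclideanSpace ℝ (Fin d)} {c : ℝ} (h : ∀ x ∈ K, ⟪x, y⟫ ≤ c) : suppFn K y ≤ c := by
  apply csSup_le (h0.image _)
  rintro _ ⟨x, hx, rfl⟩
  exact h x hx

lemma suppFn_mono {d : ℕ} {K K' : Set (EuclideanSpace ℝ (Fin d))} (h0 : K.Nonempty)
    (h : K ⊆ K') (hK : ∀ x ∈ K', ‖x‖ ≤ 1) (y : EuclideanSpace ℝ (Fin d)) :
    suppFn K y ≤ suppFn K' y :=
  suppFn_le h0 fun _ hx => le_suppFn hK (h hx) y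

lemma suppFn_le_norm {d : ℕ} {K : Set (EuclideanSpace ℝ (Fin d))} (h0 : K.Nonempty)
    (hK : ∀ x ∈ K, ‖x‖ ≤ 1) (y : EuclideanSpace ℝ (Fin d)) : suppFn K y ≤ ‖y‖ := by
  apply suppFn_le h0
  intro x hx
  have h1 := real_inner_le_norm x y
  have h2 := hK x hx
  have h3 := norm_nonneg y
  nlinarith

lemma suppFn_eq_one {d : ℕ} {K : Set (EuclideanSpace ℝ (Fin d))}
    (hK : ∀ x ∈ K, ‖x‖ ≤ 1) {y : EuclideanSpace ℝ (Fin d)} (hy : ‖y‖ = 1) (hyK : y ∈ K) :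
    suppFn K y = 1 := by
  apply le_antisymm
  · rw [← hy]; exact suppFn_le_norm ⟨y, hyK⟩ hK y
  · have := le_suppFn hK hyK y
    rwa [real_inner_self_eq_norm_sq, hy, one_pow] at this

lemma suppFn_continuous {d : ℕ} {K : Set (EuclideanSpace ℝ (Fin d))} (h0 : K.Nonempty)
    (hK : ∀ x ∈ K, ‖x‖ ≤ 1) : Continuous (suppFn K) := by
  have key : ∀ y z, suppFn K y ≤ suppFn K z + ‖y - z‖ := by
    intro y z
    apply suppFn_le h0
    intro x hx
    have h1 := le_suppFn hK hx z
    have h2 := real_inner_le_norm x (y - z)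
    have h3 := hK x hx
    have h4 := norm_nonneg (y - z)
    rw [inner_sub_right] at h2
    nlinarith
  have : LipschitzWith 1 (suppFn K) := by
    apply LipschitzWith.of_le_add
    intro y z
    rw [dist_eq_norm]
    exact key y z
  exact this.continuous

lemma slab_norm {d : ℕ} {v : EuclideanSpace ℝ (Fin d)} {t : ℝ} :
    ∀ x ∈ slabBody v t, ‖x‖ ≤ 1 := fun _ hx => hx.1

lemma slab_nonempty {d : ℕ} {v : EuclideanSpace ℝ (Fin d)} {t : ℝ} (ht : 0 ≤ t) :
    (slabBody v t).Nonempty := ⟨0, by simp [slabBody, ht]⟩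

/-- Maximizer of a linear functional over the slab body, one-sided. -/
lemma exists_max_aux {d : ℕ} (hd : 2 ≤ d) {v y : EuclideanSpace ℝ (Fin d)} {t : ℝ}
    (hv : ‖v‖ = 1) (hy : ‖y‖ = 1) (ht0 : 0 < t) (ht1 : t < 1) (h : t < ⟪y, v⟫) :
    ∃ x : EuclideanSpace ℝ (Fin d), ‖x‖ = 1 ∧ ⟪x, v⟫ = t ∧
      ∀ z : EuclideanSpace ℝ (Fin d), ‖z‖ ≤ 1 → ⟪z, v⟫ ≤ t → ⟪z, y⟫ ≤ ⟪x, y⟫ := by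
  suffices H : ∃ (x : EuclideanSpace ℝ (Fin d)) (a b : ℝ), ‖x‖ = 1 ∧ ⟪x, v⟫ = t ∧ 0 ≤ a ∧ 0 ≤ b ∧
      y = a • v + b • x by
    obtain ⟨x, a, b, hx, hxv, ha, hb, rfl⟩ := H
    refine ⟨x, hx, hxv, fun z hz hzv => ?_⟩
    have h1 := real_inner_le_norm z x
    simp only [inner_add_right, inner_smul_right, real_inner_self_eq_norm_sq, hx, hxv]
    rw [hx] at h1
    nlinarith [mul_le_mul_of_nonneg_left hzv ha, mul_le_mul_of_nonneg_left (h1.trans (by linarith : _ ≤ (1:ℝ))) hb]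
  set c := ⟪y, v⟫ with hc
  have hc1 : c ≤ 1 := by
    have := real_inner_le_norm y v
    rwa [hy, hv, one_mul] at this
  rcases hc1.eq_or_lt with h1 | h1
  · have hyv : y = v := (inner_eq_one_iff_of_norm_eq_one hy hv).1 h1
    have hpre : IsPreconnected (Metric.sphere (0 : EuclideanSpace ℝ (Fin d)) 1) := by
      apply isPreconnected_sphere
      rw [rank_eq_card_basis (PiLp.basisFun 2 ℝ (Fin d))]
      simp only [Fintype.card_fin]
      exact_mod_cast hd
    have := hpre.intermediate_value (a := -v) (b := v) (by simp [hv]) (by simp [hv])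
      (f := fun x => ⟪x, v⟫) (by fun_prop)
    have ht : t ∈ Set.Icc ⟪-v, v⟫ ⟪v, v⟫ := by
      simp only [inner_neg_left, real_inner_self_eq_norm_sq, hv]
      constructor <;> linarith
    obtain ⟨x, hx, hxt⟩ := this ht
    exact ⟨x, 1, 0, by simpa using hx, hxt, by norm_num, le_rfl, by simp [hyv]⟩
  · set m := √((1 - c ^ 2) / (1 - t ^ 2)) with hm
    have hB : 0 < 1 - c ^ 2 := by nlinarith
    have hA : 0 < 1 - t ^ 2 := by nlinarith
    have hm0 : 0 < m := Real.sqrt_pos.2 (by positivity)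
    have hm2 : m ^ 2 * (1 - t ^ 2) = 1 - c ^ 2 := by
      rw [hm, Real.sq_sqrt (by positivity)]; field_simp
    have hm1 : m ≤ 1 := by
      exact Real.sqrt_le_iff.2 ⟨zero_le_one, by rw [one_pow, div_le_one hA]; nlinarith⟩
    have hnorm : ‖y - (c - m * t) • v‖ = m := by
      have : ‖y - (c - m * t) • v‖ ^ 2 = m ^ 2 := by
        rw [norm_sub_sq_real, inner_smul_right, norm_smul, hv, hy, ← hc, mul_one, Real.norm_eq_abs,
          sq_abs]
        nlinarith
      exact (pow_left_inj₀ (norm_nonneg _) hm0.le two_ne_zero).1 this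
    refine ⟨m⁻¹ • (y - (c - m * t) • v), c - m * t, m, ?_, ?_, ?_, hm0.le, ?_⟩
    · rw [norm_smul, hnorm, norm_inv, Real.norm_eq_abs, abs_of_pos hm0, inv_mul_cancel₀ hm0.ne']
    · rw [real_inner_smul_left, inner_sub_left, real_inner_smul_left, ← hc,
        real_inner_self_eq_norm_sq, hv]
      field_simp; ring
    · nlinarith
    · rw [smul_smul, mul_inv_cancel₀ hm0.ne']; simp

lemma slab_neg {d : ℕ} (v : EuclideanSpace ℝ (Fin d)) (t : ℝ) : slabBody (-v) t = slabBody v t := by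
  simp [slabBody, inner_neg_right]

lemma exists_max {d : ℕ} (hd : 2 ≤ d) {v y : EuclideanSpace ℝ (Fin d)} {t : ℝ}
    (hv : ‖v‖ = 1) (hy : ‖y‖ = 1) (ht0 : 0 < t) (ht1 : t < 1) (h : t < |⟪y, v⟫|) :
    ∃ x : EuclideanSpace ℝ (Fin d), ‖x‖ = 1 ∧ |⟪x, v⟫| = t ∧
      suppFn (slabBody v t) y ≤ ⟪x, y⟫ := by
  rcases lt_abs.1 h with h | h
  · obtain ⟨x, hx, hxt, hmax⟩ := exists_max_aux hd hv hy ht0 ht1 h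
    refine ⟨x, hx, by rw [hxt, abs_of_pos ht0], suppFn_le (slab_nonempty ht0.le) ?_⟩
    intro z hz
    exact hmax z hz.1 ((le_abs_self _).trans hz.2)
  · rw [← inner_neg_right] at h
    obtain ⟨x, hx, hxt, hmax⟩ := exists_max_aux hd (by rwa [norm_neg]) hy ht0 ht1 h
    rw [inner_neg_right] at hxt
    refine ⟨x, hx, by rw [← abs_neg, hxt, abs_of_pos ht0], suppFn_le (slab_nonempty ht0.le) ?_⟩
    intro z hz
    refine hmax z hz.1 ?_
    rw [inner_neg_right]
    exact (neg_le_abs _).trans hz.2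

/-- Upper bound of the support function of the slab body near the pole. -/
lemma suppFn_slab_le {d : ℕ} {v y : EuclideanSpace ℝ (Fin d)} {r : ℝ}
    (hv : ‖v‖ = 1) (hy : ‖y‖ = 1) (hr1 : 0 ≤ 1 - r ^ 2 / 2) (h : ‖y - v‖ ≤ r / 2) :
    suppFn (slabBody v (1 - r ^ 2 / 2)) y ≤ 1 - r ^ 2 / 8 := by
  apply suppFn_le (slab_nonempty hr1)
  intro x hx
  have h1 : ⟪x, v⟫ ≤ 1 - r ^ 2 / 2 := (le_abs_self _).trans hx.2
  have h2 : ⟪x, y - (1 / 2 : ℝ) • v⟫ ≤ ‖y - (1 / 2 : ℝ) • v‖ := by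
    have := real_inner_le_norm x (y - (1 / 2 : ℝ) • v)
    have h3 := hx.1
    have := norm_nonneg (y - (1 / 2 : ℝ) • v)
    nlinarith
  have h3 : ‖y - (1 / 2 : ℝ) • v‖ ^ 2 = 1 / 4 + ‖y - v‖ ^ 2 / 2 := by
    rw [norm_sub_sq_real, norm_sub_sq_real, inner_smul_right, norm_smul, hv, hy]
    norm_num; ring
  have h4 : ‖y - (1 / 2 : ℝ) • v‖ ≤ 1 / 2 + ‖y - v‖ ^ 2 / 2 := by
    apply le_of_sq_le_sq _ (by positivity)
    rw [h3]; nlinarith [sq_nonneg (‖y - v‖ ^ 2)]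
  have h5 : ‖y - v‖ ^ 2 ≤ (r / 2) ^ 2 := pow_le_pow_left₀ (norm_nonneg _) h 2
  rw [inner_sub_right, inner_smul_right] at h2
  nlinarith

/-! ### The measure on the sphere -/

/-- The map of the sphere induced by a linear isometry. -/
def sphereMap {d : ℕ} (L : EuclideanSpace ℝ (Fin d) ≃ₗᵢ[ℝ] EuclideanSpace ℝ (Fin d))
    (y : Metric.sphere (0 : EuclideanSpace ℝ (Fin d)) 1) :
    Metric.sphere (0 : EuclideanSpace ℝ (Fin d)) 1 :=
  ⟨L y, by simp⟩

lemma sphereMap_continuous {d : ℕ}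
    (L : EuclideanSpace ℝ (Fin d) ≃ₗᵢ[ℝ] EuclideanSpace ℝ (Fin d)) : Continuous (sphereMap L) :=
  Continuous.subtype_mk (L.continuous.comp continuous_subtype_val) _

open scoped Pointwise in
lemma toSphere_map {d : ℕ}
    (L : EuclideanSpace ℝ (Fin d) ≃ₗᵢ[ℝ] EuclideanSpace ℝ (Fin d)) :
    Measure.map (sphereMap L) (volume : Measure (EuclideanSpace ℝ (Fin d))).toSphere =
      (volume : Measure (EuclideanSpace ℝ (Fin d))).toSphere := by
  have hm : Measurable (sphereMap L) := (sphereMap_continuous L).measurable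
  ext s hs
  rw [Measure.map_apply hm hs, Measure.toSphere_apply' _ hs, Measure.toSphere_apply' _ (hm hs)]
  congr 1
  have h1 : (Set.Ioo (0 : ℝ) 1 • ((↑) '' (sphereMap L ⁻¹' s)) : Set (EuclideanSpace ℝ (Fin d))) =
      L ⁻¹' (Set.Ioo (0 : ℝ) 1 • ((↑) '' s)) := by
    ext x
    simp only [Set.mem_smul, Set.mem_image, Set.mem_preimage]
    constructor
    · rintro ⟨c, hc, _, ⟨y, hy, rfl⟩, rfl⟩
      exact ⟨c, hc, _, ⟨_, hy, rfl⟩, by simp [sphereMap]⟩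
    · rintro ⟨c, hc, _, ⟨y, hy, rfl⟩, hx⟩
      refine ⟨c, hc, _, ⟨sphereMap L.symm y, ?_, rfl⟩, ?_⟩
      · have : sphereMap L (sphereMap L.symm y) = y := by
          apply Subtype.ext; simp [sphereMap]
        rwa [this]
      · apply L.injective
        rw [← hx]; simp [sphereMap]
  rw [h1]
  exact L.measurePreserving.measure_preimage_equiv
    (f := L.toMeasurableEquiv) _

lemma sphereMeasure_map {d : ℕ}
    (L : EuclideanSpace ℝ (Fin d) ≃ₗᵢ[ℝ] EuclideanSpace ℝ (Fin d)) :
    Measure.map (sphereMap L) (sphereMeasure d) = sphereMeasure d := by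
  rw [sphereMeasure, Measure.map_smul, toSphere_map]

lemma sphereMeasure_finite {d : ℕ} (hd : 2 ≤ d) : IsFiniteMeasure (sphereMeasure d) := by
  have : Nonempty (Fin d) := ⟨⟨0, by omega⟩⟩
  rw [sphereMeasure]
  apply Measure.smul_finite
  rw [ENNReal.inv_ne_top, ne_eq, Measure.measure_univ_eq_zero]
  exact Measure.toSphere_ne_zero _

lemma sphereMeasure_ball {d : ℕ} (hd : 2 ≤ d) (x : Metric.sphere (0 : EuclideanSpace ℝ (Fin d)) 1)
    {r : ℝ} (hr0 : 0 < r) (hr : r ≤ 2) :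
    (r / 4) ^ d ≤ (sphereMeasure d).real (Metric.ball x r) := by
  have : Nonempty (Fin d) := ⟨⟨0, by omega⟩⟩
  have h1 := Measure.toSphereBallBound_mul_measureReal_unitBall_le_toSphere_ball
    (volume : Measure (EuclideanSpace ℝ (Fin d))) hr0 x
  have hω : 0 < (volume : Measure (EuclideanSpace ℝ (Fin d))).real (Metric.ball 0 1) :=
    ENNReal.toReal_pos (Metric.measure_ball_pos _ _ one_pos).ne' measure_ball_lt_top.ne
  have hd0 : (0 : ℝ) < d := by exact_mod_cast (by omega : 0 < d)
  rw [sphereMeasure, measureReal_ennreal_smul_apply, ENNReal.toReal_inv]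
  change _ ≤ ((volume : Measure (EuclideanSpace ℝ (Fin d))).toSphere.real Set.univ)⁻¹ * _
  rw [Measure.toSphere_real_apply_univ, finrank_euclideanSpace_fin]
  rw [Measure.toSphereBallBound, finrank_euclideanSpace_fin, if_pos ⟨by omega, hr0⟩,
    min_eq_left (by rw [Real.toNNReal_le_iff_le_coe]; exact hr)] at h1
  push_cast at h1
  rw [Real.coe_toNNReal _ hr0.le] at h1
  rw [le_inv_mul_iff₀ (by positivity)]
  linarith

/-! ### The distance for one slab -/

/-- The integral for a single slab. -/
def slabInt (p : ℝ) {d : ℕ} (v : EuclideanSpace ℝ (Fin d)) (t : ℝ) : ℝ :=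
  ∫ y : Metric.sphere (0 : EuclideanSpace ℝ (Fin d)) 1,
    (1 - suppFn (slabBody v t) (y : EuclideanSpace ℝ (Fin d))) ^ p ∂ sphereMeasure d

lemma suppFn_slab_rot {d : ℕ} (L : EuclideanSpace ℝ (Fin d) ≃ₗᵢ[ℝ] EuclideanSpace ℝ (Fin d))
    (v y : EuclideanSpace ℝ (Fin d)) (t : ℝ) :
    suppFn (slabBody (L v) t) (L y) = suppFn (slabBody v t) y := by
  unfold suppFn
  congr 1
  ext c
  simp only [Set.mem_image, slabBody, Set.mem_ofPred_eq]
  constructor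
  · rintro ⟨x, ⟨h1, h2⟩, h3⟩
    refine ⟨L.symm x, ⟨by simpa using h1, ?_⟩, ?_⟩
    · rwa [← L.inner_map_map, L.apply_symm_apply]
    · rwa [← L.inner_map_map, L.apply_symm_apply]
  · rintro ⟨x, ⟨h1, h2⟩, h3⟩
    exact ⟨L x, ⟨by simpa using h1, by rwa [L.inner_map_map]⟩, by rwa [L.inner_map_map]⟩

lemma slabInt_rot (p : ℝ) {d : ℕ} {v w : EuclideanSpace ℝ (Fin d)} (hv : ‖v‖ = 1) (hw : ‖w‖ = 1)
    {t : ℝ} (ht : 0 ≤ t) : slabInt p v t = slabInt p w t := by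
  obtain ⟨L, hL⟩ : ∃ L : EuclideanSpace ℝ (Fin d) ≃ₗᵢ[ℝ] EuclideanSpace ℝ (Fin d), L v = w :=
    ⟨_, Submodule.reflection_sub (hv.trans hw.symm)⟩
  have hm : Measurable (sphereMap L) := (sphereMap_continuous L).measurable
  unfold slabInt
  conv_rhs => rw [← sphereMeasure_map L]
  rw [integral_map hm.aemeasurable]
  · congr 1
    ext y
    rw [← hL]
    simp only [sphereMap, suppFn_slab_rot]
  · have h1 : Measurable (fun y : Metric.sphere (0 : EuclideanSpace ℝ (Fin d)) 1 =>
        suppFn (slabBody w t) (y : EuclideanSpace ℝ (Fin d))) :=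
      ((suppFn_continuous (slab_nonempty ht) slab_norm).comp continuous_subtype_val).measurable
    exact ((measurable_const.sub h1).pow_const p).aestronglyMeasurable

lemma slab_integrable {p : ℝ} (hp : 0 < p) {d : ℕ} (hd : 2 ≤ d) (v : EuclideanSpace ℝ (Fin d))
    {t : ℝ} (ht : 0 ≤ t) :
    Integrable (fun y : Metric.sphere (0 : EuclideanSpace ℝ (Fin d)) 1 =>
      (1 - suppFn (slabBody v t) (y : EuclideanSpace ℝ (Fin d))) ^ p) (sphereMeasure d) := by
  have := sphereMeasure_finite hd
  have h1 : Continuous (fun y : Metric.sphere (0 : EuclideanSpace ℝ (Fin d)) 1 =>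
      (1 - suppFn (slabBody v t) (y : EuclideanSpace ℝ (Fin d))) ^ p) := by
    refine Continuous.rpow_const ?_ (fun _ => Or.inr hp.le)
    exact continuous_const.sub
      ((suppFn_continuous (slab_nonempty ht) slab_norm).comp continuous_subtype_val)
  exact h1.integrable_of_hasCompactSupport (HasCompactSupport.of_compactSpace _)

lemma one_sub_supp_nonneg {d : ℕ} (v : EuclideanSpace ℝ (Fin d)) {t : ℝ} (ht : 0 ≤ t)
    (y : Metric.sphere (0 : EuclideanSpace ℝ (Fin d)) 1) :
    0 ≤ 1 - suppFn (slabBody v t) (y : EuclideanSpace ℝ (Fin d)) := by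
  have := suppFn_le_norm (slab_nonempty (v := v) ht) slab_norm (y : EuclideanSpace ℝ (Fin d))
  rw [norm_eq_of_mem_sphere] at this
  linarith

lemma slabInt_anti {p : ℝ} (hp : 0 < p) {d : ℕ} (hd : 2 ≤ d) (v : EuclideanSpace ℝ (Fin d))
    {s t : ℝ} (hs : 0 ≤ s) (hst : s ≤ t) : slabInt p v t ≤ slabInt p v s := by
  apply integral_mono (slab_integrable hp hd v (hs.trans hst)) (slab_integrable hp hd v hs)
  intro y
  apply Real.rpow_le_rpow (one_sub_supp_nonneg v (hs.trans hst) y) _ hp.le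
  have := suppFn_mono (slab_nonempty (v := v) hs) (K' := slabBody v t)
    (fun x hx => ⟨hx.1, hx.2.trans hst⟩) slab_norm (y : EuclideanSpace ℝ (Fin d))
  linarith

lemma slabInt_nonneg {p : ℝ} {d : ℕ} (v : EuclideanSpace ℝ (Fin d))
    {t : ℝ} (ht : 0 ≤ t) : 0 ≤ slabInt p v t :=
  integral_nonneg fun y => Real.rpow_nonneg (one_sub_supp_nonneg v ht y) p

lemma slabInt_lower {p : ℝ} (hp : 0 < p) {d : ℕ} (hd : 2 ≤ d) {v : EuclideanSpace ℝ (Fin d)}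
    (hv : ‖v‖ = 1) {r : ℝ} (hr0 : 0 < r) (hr1 : r ≤ 1) :
    (r ^ 2 / 8) ^ p * (r / 8) ^ d ≤ slabInt p v (1 - r ^ 2 / 2) := by
  have := sphereMeasure_finite hd
  have ht : 0 ≤ 1 - r ^ 2 / 2 := by nlinarith
  set x : Metric.sphere (0 : EuclideanSpace ℝ (Fin d)) 1 := ⟨v, by simpa using hv⟩
  have h1 := sphereMeasure_ball hd x (r := r / 2) (by positivity) (by linarith)
  have h2 : (r ^ 2 / 8) ^ p * (sphereMeasure d).real (Metric.ball x (r / 2)) ≤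
      ∫ y in Metric.ball x (r / 2),
        (1 - suppFn (slabBody v (1 - r ^ 2 / 2)) (y : EuclideanSpace ℝ (Fin d))) ^ p
          ∂ sphereMeasure d := by
    apply setIntegral_ge_of_const_le_real measurableSet_ball (measure_ne_top _ _)
    · intro y hy
      apply Real.rpow_le_rpow (by positivity) _ hp.le
      have h3 : ‖(y : EuclideanSpace ℝ (Fin d)) - v‖ ≤ r / 2 := by
        have := (Metric.mem_ball.1 hy).le
        rwa [Subtype.dist_eq, dist_eq_norm] at this
      have := suppFn_slab_le hv (norm_eq_of_mem_sphere y) ht h3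
      linarith
    · exact (slab_integrable hp hd v ht).integrableOn
  have h3 := setIntegral_le_integral (s := Metric.ball x (r / 2)) (slab_integrable hp hd v ht)
    (Filter.Eventually.of_forall fun y => Real.rpow_nonneg (one_sub_supp_nonneg v ht y) p)
  refine le_trans ?_ (h2.trans h3)
  have : r / 8 = r / 2 / 4 := by ring
  rw [this]
  gcongr

/-! ### The bodies -/

/-- The ball with the first `n` pairs of caps cut off. -/
def body {d : ℕ} (v : ℕ → EuclideanSpace ℝ (Fin d)) (t : ℕ → ℝ) (n : ℕ) :
    Set (EuclideanSpace ℝ (Fin d)) :=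
  {x | ‖x‖ ≤ 1 ∧ ∀ i < n, |⟪x, v i⟫| ≤ t i}

lemma body_norm {d : ℕ} {v : ℕ → EuclideanSpace ℝ (Fin d)} {t : ℕ → ℝ} {n : ℕ} :
    ∀ x ∈ body v t n, ‖x‖ ≤ 1 := fun _ hx => hx.1

lemma body_anti {d : ℕ} (v : ℕ → EuclideanSpace ℝ (Fin d)) (t : ℕ → ℝ) (n : ℕ) :
    body v t (n + 1) ⊆ body v t n :=
  fun _ hx => ⟨hx.1, fun i hi => hx.2 i (by omega)⟩

lemma body_eq {d : ℕ} (v : ℕ → EuclideanSpace ℝ (Fin d)) (t : ℕ → ℝ) (n : ℕ) :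
    body v t n = Metric.closedBall 0 1 ∩ ⋂ i, ⋂ (_ : i < n), (fun x => ⟪v i, x⟫) ⁻¹' Set.Icc (-t i) (t i) := by
  ext x
  simp only [body, Set.mem_ofPred_eq, Set.mem_inter_iff, mem_closedBall_zero_iff, Set.mem_iInter,
    Set.mem_preimage, Set.mem_Icc, abs_le, real_inner_comm]

lemma body_compact {d : ℕ} (v : ℕ → EuclideanSpace ℝ (Fin d)) (t : ℕ → ℝ) (n : ℕ) :
    IsCompact (body v t n) := by
  rw [body_eq]
  apply (isCompact_closedBall _ _).inter_right
  refine isClosed_iInter fun i => isClosed_iInter fun _ => ?_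
  exact isClosed_Icc.preimage (by fun_prop)

lemma body_convex {d : ℕ} (v : ℕ → EuclideanSpace ℝ (Fin d)) (t : ℕ → ℝ) (n : ℕ) :
    Convex ℝ (body v t n) := by
  rw [body_eq]
  apply (convex_closedBall _ _).inter
  refine convex_iInter fun i => convex_iInter fun _ => ?_
  exact (convex_Icc _ _).is_linear_preimage (innerₛₗ ℝ (v i)).isLinear

lemma body_symm {d : ℕ} (v : ℕ → EuclideanSpace ℝ (Fin d)) (t : ℕ → ℝ) (n : ℕ) :
    body v t n = -body v t n := by
  ext x
  simp [body, inner_neg_left]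

lemma body_nonempty {d : ℕ} (v : ℕ → EuclideanSpace ℝ (Fin d)) {t : ℕ → ℝ} (ht : ∀ i, 0 < t i)
    (n : ℕ) : (body v t n).Nonempty :=
  ⟨0, ⟨by simp, fun i _ => by simpa using (ht i).le⟩⟩

lemma suppFn_body {d : ℕ} (hd : 2 ≤ d) {v : ℕ → EuclideanSpace ℝ (Fin d)} {t : ℕ → ℝ}
    (hv : ∀ i, ‖v i‖ = 1) (ht0 : ∀ i, 0 < t i) (ht1 : ∀ i, t i < 1)
    (hsep : ∀ i j, i ≠ j → ∀ x, ‖x‖ = 1 → t i ≤ |⟪x, v i⟫| → |⟪x, v j⟫| < t j)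
    {y : EuclideanSpace ℝ (Fin d)} (hy : ‖y‖ = 1) {i m : ℕ} (him : i < m)
    (h : t i < |⟪y, v i⟫|) : suppFn (body v t m) y = suppFn (slabBody (v i) (t i)) y := by
  apply le_antisymm
  · have hsub : body v t m ⊆ slabBody (v i) (t i) := fun x hx => ⟨hx.1, hx.2 i him⟩
    exact suppFn_mono (body_nonempty v ht0 m) hsub slab_norm y
  · obtain ⟨x, hx, hxt, hmax⟩ := exists_max hd (hv i) hy (ht0 i) (ht1 i) h
    have hmem : x ∈ body v t m := ⟨hx.le, fun j _ => ?_⟩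
    · exact hmax.trans (le_suppFn body_norm hmem y)
    by_cases hij : i = j
    · subst hij; exact hxt.le
    · exact (hsep i j hij x hx hxt.ge).le

lemma suppFn_body_sub {d : ℕ} (hd : 2 ≤ d) {v : ℕ → EuclideanSpace ℝ (Fin d)} {t : ℕ → ℝ}
    (hv : ∀ i, ‖v i‖ = 1) (ht0 : ∀ i, 0 < t i) (ht1 : ∀ i, t i < 1)
    (hsep : ∀ i j, i ≠ j → ∀ x, ‖x‖ = 1 → t i ≤ |⟪x, v i⟫| → |⟪x, v j⟫| < t j)
    {y : EuclideanSpace ℝ (Fin d)} (hy : ‖y‖ = 1) (n : ℕ) :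
    suppFn (body v t n) y - suppFn (body v t (n + 1)) y =
      1 - suppFn (slabBody (v n) (t n)) y := by
  by_cases h : t n < |⟪y, v n⟫|
  · rw [suppFn_body hd hv ht0 ht1 hsep hy (Nat.lt_succ_self n) h]
    rw [suppFn_eq_one body_norm hy]
    exact ⟨hy.le, fun j hj => (hsep n j (by omega) y hy h.le).le⟩
  · push Not at h
    rw [suppFn_eq_one (slab_norm (v := v n) (t := t n)) hy ⟨hy.le, h⟩]
    by_cases h2 : y ∈ body v t n
    · rw [suppFn_eq_one body_norm hy h2, suppFn_eq_one body_norm hy]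
      refine ⟨hy.le, fun j hj => ?_⟩
      rcases Nat.lt_succ_iff_lt_or_eq.1 hj with hj | rfl
      · exact h2.2 j hj
      · exact h
    · have : ∃ i < n, t i < |⟪y, v i⟫| := by
        by_contra hcon
        push Not at hcon
        exact h2 ⟨hy.le, hcon⟩
      obtain ⟨i, hi, hyi⟩ := this
      rw [suppFn_body hd hv ht0 ht1 hsep hy hi hyi,
        suppFn_body hd hv ht0 ht1 hsep hy (by omega : i < n + 1) hyi]
      ring

lemma Dp_body {p : ℝ} {d : ℕ} (hd : 2 ≤ d) {v : ℕ → EuclideanSpace ℝ (Fin d)} {t : ℕ → ℝ}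
    (hv : ∀ i, ‖v i‖ = 1) (ht0 : ∀ i, 0 < t i) (ht1 : ∀ i, t i < 1)
    (hsep : ∀ i j, i ≠ j → ∀ x, ‖x‖ = 1 → t i ≤ |⟪x, v i⟫| → |⟪x, v j⟫| < t j) (n : ℕ) :
    Dp p (body v t n) (body v t (n + 1)) = slabInt p (v n) (t n) ^ (1 / p) := by
  unfold Dp slabInt
  congr 2
  ext y
  rw [suppFn_body_sub hd hv ht0 ht1 hsep (norm_eq_of_mem_sphere y) n,
    abs_of_nonneg (one_sub_supp_nonneg _ (ht0 n).le y)]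

lemma near_of_inner {d : ℕ} {v x : EuclideanSpace ℝ (Fin d)} {r : ℝ} (hr : 0 ≤ r)
    (hv : ‖v‖ = 1) (hx : ‖x‖ = 1) (h : 1 - r ^ 2 / 2 ≤ |⟪x, v⟫|) :
    ‖x - v‖ ≤ r ∨ ‖x + v‖ ≤ r := by
  rcases le_abs.1 h with h | h
  · left
    apply le_of_sq_le_sq _ hr
    rw [norm_sub_sq_real, hx, hv]; linarith
  · right
    apply le_of_sq_le_sq _ hr
    rw [norm_add_sq_real, hx, hv]; linarith

lemma sep_of_dist {d : ℕ} {v : ℕ → EuclideanSpace ℝ (Fin d)} {r : ℕ → ℝ}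
    (hv : ∀ i, ‖v i‖ = 1) (hr : ∀ i, 0 < r i) (hanti : Antitone r)
    (h : ∀ n, ∀ i < n, 2 * r i < ‖v n - v i‖ ∧ 2 * r i < ‖v n + v i‖) :
    ∀ i j, i ≠ j → ∀ x, ‖x‖ = 1 → 1 - r i ^ 2 / 2 ≤ |⟪x, v i⟫| →
      |⟪x, v j⟫| < 1 - r j ^ 2 / 2 := by
  have key : ∀ i j, i ≠ j → r i + r j < ‖v i - v j‖ ∧ r i + r j < ‖v i + v j‖ := by
    intro i j hij
    rcases lt_or_gt_of_ne hij with hlt | hlt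
    · have h1 := hanti hlt.le
      obtain ⟨h2, h3⟩ := h j i hlt
      rw [norm_sub_rev] at h2
      rw [add_comm] at h3
      constructor <;> linarith
    · have h1 := hanti hlt.le
      obtain ⟨h2, h3⟩ := h i j hlt
      constructor <;> linarith
  intro i j hij x hx h1
  by_contra! h2
  obtain ⟨k1, k2⟩ := key i j hij
  have e1 : v i - v j = (x - v j) - (x - v i) := by abel
  have e2 : v i + v j = (x + v j) - (x - v i) := by abel
  have e3 : v i + v j = (x + v i) - (x - v j) := by abel
  have e4 : v i - v j = (x + v i) - (x + v j) := by abel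
  rcases near_of_inner (hr i).le (hv i) hx h1 with a | a <;>
    rcases near_of_inner (hr j).le (hv j) hx h2 with b | b
  · rw [e1] at k1; linarith [norm_sub_le (x - v j) (x - v i)]
  · rw [e2] at k2; linarith [norm_sub_le (x + v j) (x - v i)]
  · rw [e3] at k2; linarith [norm_sub_le (x + v i) (x - v j)]
  · rw [e4] at k1; linarith [norm_sub_le (x + v i) (x + v j)]

/-! ### Greedy choice of the centers -/

lemma greedy {α : Type} (a : α) (Q : ℕ → α → α → Prop)
    (h : ∀ n (g : ℕ → α), ∃ v, ∀ i < n, Q i (g i) v) :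
    ∃ f : ℕ → α, ∀ n, ∀ i < n, Q i (f i) (f n) := by
  classical
  choose F hF using h
  let f : ℕ → α := fun n => Nat.strongRecOn n
    (fun n ih => F n (fun i => if hi : i < n then ih i hi else a))
  have hf : ∀ n, f n = F n (fun i => if i < n then f i else a) := by
    intro n
    simp only [f]
    rw [Nat.strongRecOn_eq]
    simp only [dite_eq_ite]
  refine ⟨f, fun n i hi => ?_⟩
  have := hF n (fun i => if i < n then f i else a) i hi
  rw [← hf n] at this
  simpa [hi] using this

lemma cone_cover {d : ℕ} {ρ : ℝ} (hρ : 0 < ρ) {g y : EuclideanSpace ℝ (Fin d)} (hg : ‖g‖ = 1)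
    (h : ‖y - g‖ ≤ ρ) {s : ℝ} (hs0 : 0 ≤ s) (hs1 : s ≤ 1) :
    ∃ k ∈ Finset.range (⌊1 / ρ⌋₊ + 1), s • y ∈ Metric.closedBall ((k * ρ) • g) (2 * ρ) := by
  refine ⟨⌊s / ρ⌋₊, ?_, ?_⟩
  · rw [Finset.mem_range, Nat.lt_succ_iff]
    apply Nat.floor_mono
    gcongr
  · rw [mem_closedBall_iff_norm]
    have e : s • y - ((⌊s / ρ⌋₊ : ℝ) * ρ) • g = s • (y - g) + (s - ⌊s / ρ⌋₊ * ρ) • g := by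
      rw [smul_sub, sub_smul]; abel
    have h1 : (⌊s / ρ⌋₊ : ℝ) * ρ ≤ s := by
      rw [← le_div_iff₀ hρ]; exact Nat.floor_le (by positivity)
    have h2 : s < (⌊s / ρ⌋₊ + 1 : ℝ) * ρ := by
      rw [← div_lt_iff₀ hρ]; exact Nat.lt_floor_add_one _
    rw [e]
    refine (norm_add_le _ _).trans ?_
    rw [norm_smul, norm_smul, hg, Real.norm_eq_abs, Real.norm_eq_abs, abs_of_nonneg hs0,
      abs_of_nonneg (by linarith)]
    nlinarith [norm_nonneg (y - g)]

/-- Union of balls covering a cone. -/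
def coneU {d : ℕ} (ρ : ℝ) (g : EuclideanSpace ℝ (Fin d)) : Set (EuclideanSpace ℝ (Fin d)) :=
  ⋃ k ∈ Finset.range (⌊1 / ρ⌋₊ + 1), Metric.closedBall ((k * ρ) • g) (2 * ρ)

lemma coneU_vol {d : ℕ} (hd : 2 ≤ d) {ρ : ℝ} (hρ : 0 < ρ) (hρ1 : ρ ≤ 1)
    (g : EuclideanSpace ℝ (Fin d)) :
    volume (coneU ρ g) ≤ ENNReal.ofReal (2 ^ (d + 1) * ρ ^ (d - 1)) *
      volume (Metric.ball (0 : EuclideanSpace ℝ (Fin d)) 1) := by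
  unfold coneU
  refine (measure_biUnion_finset_le _ _).trans ?_
  have h1 : ∀ k : ℕ, volume (Metric.closedBall (((k : ℝ) * ρ) • g) (2 * ρ)) =
      ENNReal.ofReal ((2 * ρ) ^ d) * volume (Metric.ball (0 : EuclideanSpace ℝ (Fin d)) 1) := by
    intro k
    rw [Measure.addHaar_closedBall _ _ (by positivity), finrank_euclideanSpace_fin]
  simp only [h1, Finset.sum_const, Finset.card_range, nsmul_eq_mul]
  rw [← mul_assoc]
  gcongr
  rw [← ENNReal.ofReal_natCast, ← ENNReal.ofReal_mul (by positivity)]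
  apply ENNReal.ofReal_le_ofReal
  have h2 : ((⌊1 / ρ⌋₊ + 1 : ℕ) : ℝ) ≤ 2 / ρ := by
    push_cast
    have h3 : (⌊1 / ρ⌋₊ : ℝ) ≤ 1 / ρ := Nat.floor_le (by positivity)
    have h4 : 1 ≤ 1 / ρ := by rw [le_div_iff₀ hρ]; linarith
    have h5 : 2 / ρ = 1 / ρ + 1 / ρ := by ring
    linarith
  calc ((⌊1 / ρ⌋₊ + 1 : ℕ) : ℝ) * (2 * ρ) ^ d ≤ 2 / ρ * (2 * ρ) ^ d := by gcongr
    _ = 2 ^ (d + 1) * ρ ^ (d - 1) := by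
      obtain ⟨e, rfl⟩ : ∃ e, d = e + 1 := ⟨d - 1, by omega⟩
      simp only [Nat.add_sub_cancel]
      field_simp
      ring

lemma exists_center {d : ℕ} (hd : 2 ≤ d) {ρ : ℕ → ℝ} (hρ : ∀ i, 0 < ρ i) (hρ1 : ∀ i, ρ i ≤ 1)
    (n : ℕ) (hsum : ∑ i ∈ Finset.range n, 2 ^ (d + 2) * ρ i ^ (d - 1) < 1)
    (g : ℕ → Metric.sphere (0 : EuclideanSpace ℝ (Fin d)) 1) :
    ∃ v : Metric.sphere (0 : EuclideanSpace ℝ (Fin d)) 1, ∀ i < n,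
      ρ i < ‖(v : EuclideanSpace ℝ (Fin d)) - g i‖ ∧ ρ i < ‖(v : EuclideanSpace ℝ (Fin d)) + g i‖ := by
  by_contra! hcon
  have hcov : Metric.ball (0 : EuclideanSpace ℝ (Fin d)) 1 ⊆
      ⋃ i ∈ Finset.range n, (coneU (ρ i) (g i : EuclideanSpace ℝ (Fin d)) ∪
        coneU (ρ i) (-(g i : EuclideanSpace ℝ (Fin d)))) := by
    intro x hx
    have hx1 : ‖x‖ ≤ 1 := (mem_ball_zero_iff.1 hx).le
    obtain ⟨y, hy⟩ : ∃ y : Metric.sphere (0 : EuclideanSpace ℝ (Fin d)) 1,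
        x = ‖x‖ • (y : EuclideanSpace ℝ (Fin d)) := by
      by_cases h0 : x = 0
      · exact ⟨g 0, by simp [h0]⟩
      · have hn : ‖x‖ ≠ 0 := norm_ne_zero_iff.2 h0
        refine ⟨⟨‖x‖⁻¹ • x, by simp [norm_smul, hn]⟩, ?_⟩
        simp [smul_smul, hn]
    obtain ⟨i, hi, hi2⟩ := hcon y
    have hgi : ‖(g i : EuclideanSpace ℝ (Fin d))‖ = 1 := norm_eq_of_mem_sphere _
    rw [Set.mem_iUnion₂]
    refine ⟨i, Finset.mem_range.2 hi, ?_⟩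
    by_cases hc : ρ i < ‖(y : EuclideanSpace ℝ (Fin d)) - g i‖
    · right
      have h3 := hi2 hc
      rw [← sub_neg_eq_add] at h3
      obtain ⟨k, hk, hk2⟩ := cone_cover (hρ i) (by rw [norm_neg, hgi]) h3 (norm_nonneg x) hx1
      rw [coneU, Set.mem_iUnion₂]
      exact ⟨k, hk, by rw [hy]; simpa [norm_smul] using hk2⟩
    · left
      push Not at hc
      obtain ⟨k, hk, hk2⟩ := cone_cover (hρ i) hgi hc (norm_nonneg x) hx1
      rw [coneU, Set.mem_iUnion₂]
      exact ⟨k, hk, by rw [hy]; simpa [norm_smul] using hk2⟩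
  have hω0 : volume (Metric.ball (0 : EuclideanSpace ℝ (Fin d)) 1) ≠ 0 :=
    (Metric.measure_ball_pos _ _ one_pos).ne'
  have hω1 : volume (Metric.ball (0 : EuclideanSpace ℝ (Fin d)) 1) ≠ ⊤ := measure_ball_lt_top.ne
  have h1 : volume (Metric.ball (0 : EuclideanSpace ℝ (Fin d)) 1) ≤
      ENNReal.ofReal (∑ i ∈ Finset.range n, 2 ^ (d + 2) * ρ i ^ (d - 1)) *
        volume (Metric.ball (0 : EuclideanSpace ℝ (Fin d)) 1) := by
    refine (measure_mono hcov).trans ((measure_biUnion_finset_le _ _).trans ?_)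
    rw [ENNReal.ofReal_sum_of_nonneg (fun i _ => by have := hρ i; positivity), Finset.sum_mul]
    apply Finset.sum_le_sum
    intro i _
    refine (measure_union_le _ _).trans ((add_le_add (coneU_vol hd (hρ i) (hρ1 i) _)
      (coneU_vol hd (hρ i) (hρ1 i) _)).trans ?_)
    have := hρ i
    rw [← add_mul, ← ENNReal.ofReal_add (by positivity) (by positivity)]
    gcongr
    apply le_of_eq; ring
  have h2 := ENNReal.ofReal_lt_one.2 hsum
  have h3 := (ENNReal.mul_lt_mul_iff_left hω0 hω1).2 h2
  rw [one_mul] at h3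
  exact absurd h1 (not_le.2 h3)

lemma exponent_lt {p : ℝ} (hp : 1 < p) {d : ℕ} (hd : ((4 * p - 1) / (p - 1) : ℝ) ≤ d) :
    2 + (d : ℝ) / p < d - 1 := by
  rw [div_le_iff₀ (by linarith)] at hd
  have h : (d : ℝ) / p < d - 3 := by
    rw [div_lt_iff₀ (by linarith)]
    nlinarith
  linarith

lemma exists_radii {d : ℕ} (hd : 2 ≤ d) {β : ℝ} (hβ0 : 0 < β) (hβ : β < d - 1) {ε : ℝ}
    (hε : 0 < ε) :
    ∃ (c : ℝ) (r : ℕ → ℝ), 0 < c ∧ c ≤ 1 / 2 ∧ c ≤ ε ∧ (∀ n, 0 < r n) ∧ (∀ n, r n ≤ c) ∧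
      Antitone r ∧ (∀ n : ℕ, r n ^ β = c ^ β * (1 / ((n + 1 : ℕ) : ℝ))) ∧
      ∀ n, ∑ i ∈ Finset.range n, 2 ^ (d + 2) * (2 * r i) ^ (d - 1) < 1 := by
  set u : ℕ → ℝ := fun n => ((n + 1 : ℕ) : ℝ) ^ (-(1 / β)) with hu
  have hu0 : ∀ n, 0 < u n := fun n => by simp only [hu]; positivity
  have hcast : ((d - 1 : ℕ) : ℝ) = d - 1 := by
    rw [Nat.cast_sub (by omega)]; simp
  have hsu : Summable (fun n => u n ^ (d - 1)) := by
    have h1 : Summable (fun n : ℕ => (n : ℝ) ^ (-(1 / β) * (d - 1))) := by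
      rw [Real.summable_nat_rpow]
      have : 1 < 1 / β * ((d : ℝ) - 1) := by
        rw [one_div_mul_eq_div, lt_div_iff₀ hβ0]; linarith
      linarith
    have h2 := (summable_nat_add_iff 1).2 h1
    refine h2.congr fun n => ?_
    simp only [hu]
    rw [← Real.rpow_natCast, ← Real.rpow_mul (by positivity), hcast]
  set S := ∑' n, u n ^ (d - 1) with hS
  have hS0 : 0 ≤ S := tsum_nonneg fun n => pow_nonneg (hu0 n).le _
  set M : ℝ := 2 ^ (d + 2) * 2 ^ (d - 1) with hM
  have hM0 : 0 < M := by positivity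
  set c : ℝ := min (1 / 2) (min ε (1 / (M * (S + 1)))) with hc
  have hc0 : 0 < c := by
    simp only [hc, lt_min_iff]
    exact ⟨by norm_num, hε, by positivity⟩
  have hc1 : c ≤ 1 / 2 := min_le_left _ _
  have hc2 : c ≤ ε := (min_le_right _ _).trans (min_le_left _ _)
  have hc3 : c ≤ 1 / (M * (S + 1)) := (min_le_right _ _).trans (min_le_right _ _)
  have hu1 : Antitone u := by
    intro m n hmn
    simp only [hu]
    apply Real.rpow_le_rpow_of_nonpos (by positivity) (by exact_mod_cast Nat.succ_le_succ hmn)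
    have : 0 < 1 / β := by positivity
    linarith
  refine ⟨c, fun n => c * u n, hc0, hc1, hc2, fun n => mul_pos hc0 (hu0 n), ?_, ?_, ?_, ?_⟩
  · intro n
    have h0 : u 0 = 1 := by simp [hu]
    have := hu1 (Nat.zero_le n)
    rw [h0] at this
    nlinarith
  · intro m n hmn
    exact mul_le_mul_of_nonneg_left (hu1 hmn) hc0.le
  · intro n
    simp only [hu]
    rw [Real.mul_rpow hc0.le (by positivity), ← Real.rpow_mul (by positivity)]
    have : -(1 / β) * β = -1 := by field_simp
    rw [this, Real.rpow_neg_one, one_div]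
  · intro n
    have e : ∀ i, 2 ^ (d + 2) * (2 * (c * u i)) ^ (d - 1) = M * c ^ (d - 1) * u i ^ (d - 1) := by
      intro i; simp only [hM, mul_pow]; ring
    simp only [e]
    rw [← Finset.mul_sum]
    have h1 : ∑ i ∈ Finset.range n, u i ^ (d - 1) ≤ S :=
      hsu.sum_le_tsum _ fun i _ => pow_nonneg (hu0 i).le _
    have h2 : c ^ (d - 1) ≤ c := pow_le_of_le_one hc0.le (by linarith) (by omega)
    rw [le_div_iff₀ (by positivity)] at hc3
    calc M * c ^ (d - 1) * ∑ i ∈ Finset.range n, u i ^ (d - 1) ≤ M * c * S := by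
          gcongr
      _ < 1 := by nlinarith [mul_pos hM0 hc0]

/-- For `p > 1`, `d ≥ (4p-1)/(p-1)` and `ε > 0`, there is a nested sequence
`B ⊇ K₁ ⊇ K₂ ⊇ ⋯` of centrally symmetric compact convex sets with
(I) `D_∞(B, Kᵢ) ≤ ε`, (II) `Σᵢ D_p(Kᵢ, Kᵢ₊₁) = ∞`, and (III) `D_p(Kᵢ, Kᵢ₊₁)`
nonincreasing in `i`. -/
theorem hard_instance (p : ℝ) (hp : 1 < p) (d : ℕ)
    (hd : ((4 * p - 1) / (p - 1) : ℝ) ≤ d) (ε : ℝ) (hε : 0 < ε) :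
    ∃ K : ℕ → Set (EuclideanSpace ℝ (Fin d)),
      (∀ i, IsCompact (K i) ∧ Convex ℝ (K i) ∧ (K i).Nonempty ∧ K i = -K i ∧
        K i ⊆ Metric.closedBall 0 1) ∧
      (∀ i, K (i + 1) ⊆ K i) ∧
      (∀ i, Metric.hausdorffDist (Metric.closedBall (0 : EuclideanSpace ℝ (Fin d)) 1) (K i) ≤ ε) ∧
      ¬ Summable (fun i => Dp p (K i) (K (i + 1))) ∧
      Antitone (fun i => Dp p (K i) (K (i + 1))) := by
  have hβ := exponent_lt hp hd
  have hp0 : 0 < p := by linarith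
  have hd2 : 2 ≤ d := by
    have h1 : (0 : ℝ) ≤ (d : ℝ) / p := by positivity
    have h2 : (2 : ℝ) ≤ d := by linarith
    exact_mod_cast h2
  obtain ⟨c, r, hc0, hc1, hc2, hr0, hrc, hra, hrβ, hsum⟩ :=
    exists_radii hd2 (by positivity : 0 < 2 + (d : ℝ) / p) hβ hε
  have e0 : EuclideanSpace ℝ (Fin d) := 0
  have pole : Metric.sphere (0 : EuclideanSpace ℝ (Fin d)) 1 :=
    ⟨EuclideanSpace.single ⟨0, by omega⟩ 1, by simp⟩
  obtain ⟨w, hw⟩ := greedy pole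
    (fun i (x y : Metric.sphere (0 : EuclideanSpace ℝ (Fin d)) 1) =>
      2 * r i < ‖(y : EuclideanSpace ℝ (Fin d)) - x‖ ∧
      2 * r i < ‖(y : EuclideanSpace ℝ (Fin d)) + x‖)
    (fun n g => exists_center hd2 (ρ := fun i => 2 * r i)
      (fun i => by have := hr0 i; positivity) (fun i => by have := hrc i; linarith) n (hsum n) g)
  set v : ℕ → EuclideanSpace ℝ (Fin d) := fun n => w n with hvdef
  have hv : ∀ i, ‖v i‖ = 1 := fun i => norm_eq_of_mem_sphere (w i)
  set t : ℕ → ℝ := fun n => 1 - r n ^ 2 / 2 with htdef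
  have hr1 : ∀ i, r i ≤ 1 := fun i => (hrc i).trans (by linarith)
  have ht0 : ∀ i, 0 < t i := fun i => by
    have h1 := hr0 i
    have h2 := hr1 i
    simp only [htdef]; nlinarith
  have ht1 : ∀ i, t i < 1 := fun i => by
    have h1 := hr0 i
    simp only [htdef]; nlinarith
  have htm : Monotone t := fun m n hmn => by
    have h1 := hra hmn
    have h2 := hr0 n
    simp only [htdef]; nlinarith
  have hsep := sep_of_dist hv hr0 hra hw
  have hD : ∀ n, Dp p (body v t n) (body v t (n + 1)) = slabInt p (v n) (t n) ^ (1 / p) :=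
    fun n => Dp_body hd2 hv ht0 ht1 hsep n
  refine ⟨body v t, fun i => ⟨body_compact v t i, body_convex v t i, body_nonempty v ht0 i,
    body_symm v t i, fun x hx => mem_closedBall_zero_iff.2 hx.1⟩, body_anti v t, ?_, ?_, ?_⟩
  · intro n
    apply Metric.hausdorffDist_le_of_mem_dist hε.le
    · intro x hx
      have hx1 : ‖x‖ ≤ 1 := mem_closedBall_zero_iff.1 hx
      have hτ : 0 ≤ 1 - c := by linarith
      refine ⟨(1 - c) • x, ⟨?_, fun i _ => ?_⟩, ?_⟩
      · rw [norm_smul, Real.norm_eq_abs, abs_of_nonneg hτ]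
        nlinarith [norm_nonneg x]
      · rw [real_inner_smul_left, abs_mul, abs_of_nonneg hτ]
        have h1 := abs_real_inner_le_norm x (v i)
        rw [hv i, mul_one] at h1
        have h2 := hr0 i
        have h3 := hrc i
        have h4 : (1 - c) * |⟪x, v i⟫| ≤ 1 - c := by
          nlinarith
        have h5 : r i ^ 2 / 2 ≤ c := by nlinarith
        simp only [htdef]; linarith
      · rw [dist_eq_norm]
        have : x - (1 - c) • x = c • x := by rw [sub_smul, one_smul]; abel
        rw [this, norm_smul, Real.norm_eq_abs, abs_of_pos hc0]
        nlinarith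
    · intro x hx
      exact ⟨x, mem_closedBall_zero_iff.2 hx.1, by simpa using hε.le⟩
  · intro hs
    simp only [hD] at hs
    set C : ℝ := (1 / 8) * (1 / 8) ^ ((d : ℝ) / p) * c ^ (2 + (d : ℝ) / p) with hC
    have hC0 : 0 < C := by positivity
    have hlow : ∀ n : ℕ, C * (1 / ((n + 1 : ℕ) : ℝ)) ≤ slabInt p (v n) (t n) ^ (1 / p) := by
      intro n
      have hrn := hr0 n
      have h1 := slabInt_lower hp0 hd2 (hv n) (hr0 n) (hr1 n)
      have h2 := Real.rpow_le_rpow (by positivity) h1 (by positivity : 0 ≤ 1 / p)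
      refine le_trans (le_of_eq ?_) h2
      rw [Real.mul_rpow (by positivity) (by positivity), ← Real.rpow_mul (by positivity),
        mul_one_div_cancel hp0.ne', Real.rpow_one, ← Real.rpow_natCast (r n / 8),
        ← Real.rpow_mul (by positivity), mul_one_div (d : ℝ) p, hC, mul_assoc _ (c ^ _), ← hrβ n,
        Real.rpow_add hrn, div_eq_mul_one_div (r n) 8, Real.mul_rpow hrn.le (by norm_num),
        Real.rpow_two]
      ring
    have h3 : Summable (fun n : ℕ => C * (1 / ((n + 1 : ℕ) : ℝ))) :=
      hs.of_nonneg_of_le (fun n => by positivity) hlow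
    rw [summable_mul_left_iff hC0.ne'] at h3
    exact Real.not_summable_one_div_natCast ((summable_nat_add_iff 1).1 h3)
  · intro m n hmn
    simp only [hD]
    apply Real.rpow_le_rpow (slabInt_nonneg _ (ht0 n).le) _ (by positivity)
    rw [slabInt_rot p (hv n) (hv m) (ht0 n).le]
    exact slabInt_anti hp0 hd2 _ (ht0 m).le (htm hmn)
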